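/- arXiv:2112.06853 — 4 statements merged into one kernel-verified Lean document; each statement's English description precedes it below -/
import Mathlib

section
/- Let Y_1, ..., Y_N be real-valued random variables (not necessarily independent) and let η_1, ..., η_N be positive real numbers satisfying ∑_{i=1}^N 1/η_i ≤ 1. Define F(i, y) = η_i · P[Y_i ≥ y]. Then F is an NFA for Y_1, ..., Y_N; that is, for every ε > 0, the expected number of indices i with F(i, Y_i) ≤ ε is at most ε: E[∑_{i=1}^N 1{F(i, Y_i) ≤ ε}] ≤ ε. -/
/-!
By linearity of expectation it suffices that `μ {F i (Y i) ≤ ε} ≤ ε / η i` for each `i`, that is,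
that the p-value `ν [t, ∞)` evaluated at a `ν`-distributed `t` is stochastically at least uniform,
where `ν` is the law of `Y i`. The sublevel set `S = {t | ν [t, ∞) ≤ c}` is an upper set, hence
Borel. By inner regularity `ν S` is the supremum of `ν K` over compact `K ⊆ S`, and a nonempty such
`K` has a least element `m ∈ S`, so `ν K ≤ ν [m, ∞) ≤ c`. This avoids distinguishing whether `S`
is an open or a closed half-line.
-/

open MeasureTheory

lemma isUpperSet_tail_le (ν : Measure ℝ) (c : ENNReal) :
    IsUpperSet {t : ℝ | ν (Set.Ici t) ≤ c} :=
  fun _ _ hab ha => (measure_mono (Set.Ici_subset_Ici.2 hab)).trans ha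

lemma measurableSet_tail_le (ν : Measure ℝ) (c : ENNReal) :
    MeasurableSet {t : ℝ | ν (Set.Ici t) ≤ c} :=
  (isUpperSet_tail_le ν c).ordConnected.measurableSet

/-- The p-value `ν [t, ∞)` is stochastically at least uniform under `ν`. -/
lemma measure_tail_le (ν : Measure ℝ) [IsFiniteMeasure ν] (c : ENNReal) :
    ν {t : ℝ | ν (Set.Ici t) ≤ c} ≤ c := by
  rw [(measurableSet_tail_le ν c).measure_eq_iSup_isCompact]
  refine iSup_le fun K => iSup_le fun hKS => iSup_le fun hK => ?_
  rcases K.eq_empty_or_nonempty with rfl | hne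
  · simp
  · obtain ⟨m, hm, hmin⟩ := hK.exists_isLeast hne
    exact (measure_mono fun x hx => hmin hx).trans (hKS hm)

/-- Proposition (Grosjean-Moisan): if `∑ i, 1/η i ≤ 1` with `η i > 0`, then
`F i y = η i * P[Y i ≥ y]` is an NFA: for every `ε > 0`, the expected number of
indices `i` with `F i (Y i) ≤ ε` is at most `ε`. -/
theorem stmt_0 {Ω : Type*} [MeasurableSpace Ω] (μ : Measure Ω) [IsProbabilityMeasure μ]
    (N : ℕ) (Y : Fin N → Ω → ℝ) (hY : ∀ i, Measurable (Y i))
    (η : Fin N → ℝ) (hη : ∀ i, 0 < η i) (hsum : ∑ i, 1 / η i ≤ 1)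
    (F : Fin N → ℝ → ℝ)
    (hF : ∀ i y, F i y = η i * (μ {ω | Y i ω ≥ y}).toReal) :
    ∀ ε : ℝ, 0 < ε →
      ∫ ω, (∑ i, Set.indicator {ω' | F i (Y i ω') ≤ ε} (fun _ => (1 : ℝ)) ω) ∂μ ≤ ε := by
  intro ε hε
  have hset : ∀ i, {ω' | F i (Y i ω') ≤ ε} =
      Y i ⁻¹' {t | μ.map (Y i) (Set.Ici t) ≤ ENNReal.ofReal (ε / η i)} := by
    intro i
    ext ω
    simp only [Set.mem_ofPred_eq, Set.mem_preimage, hF]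
    rw [Measure.map_apply (hY i) measurableSet_Ici,
      ENNReal.le_ofReal_iff_toReal_le (measure_ne_top _ _) (div_pos hε (hη i)).le,
      le_div_iff₀' (hη i)]
    rfl
  have hmeas : ∀ i, MeasurableSet {ω' | F i (Y i ω') ≤ ε} := fun i => by
    rw [hset]
    exact hY i (measurableSet_tail_le _ _)
  have hbound : ∀ i, μ.real {ω' | F i (Y i ω') ≤ ε} ≤ ε / η i := fun i => by
    refine ENNReal.toReal_le_of_le_ofReal (div_pos hε (hη i)).le ?_
    rw [hset, ← Measure.map_apply (hY i) (measurableSet_tail_le _ _)]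
    exact measure_tail_le _ _
  rw [integral_finsetSum _ fun i _ => (integrable_const (1 : ℝ)).indicator (hmeas i)]
  calc ∑ i, ∫ ω, Set.indicator {ω' | F i (Y i ω') ≤ ε} (fun _ => (1 : ℝ)) ω ∂μ
      = ∑ i, μ.real {ω' | F i (Y i ω') ≤ ε} := by
        refine Finset.sum_congr rfl fun i _ => ?_
        rw [integral_indicator_const _ (hmeas i), smul_eq_mul, mul_one]
    _ ≤ ∑ i, ε / η i := Finset.sum_le_sum fun i _ => hbound i
    _ = ε * ∑ i, 1 / η i := by
        rw [Finset.mul_sum]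
        exact Finset.sum_congr rfl fun i _ => by ring
    _ ≤ ε := mul_le_of_le_one_right hε.le hsum
end

section
/- Let K be a binomial random variable with parameters n₁ ∈ ℕ (n₁ ≥ 1) and q ∈ (0, 1), and let k₁ be an integer with 0 ≤ k₁ ≤ n₁. If k₁/n₁ ≤ q, then P[K ≥ k₁] ≥ 1/2. -/
/-!
Write `b i = P[K = i]`, `k = k₁`, `n = n₁`, and fold the distribution at `k`, comparing
`a j = b (k + j)` with its mirror image `c j = b (k - 1 - j)`. Since `∑ a + ∑ c = 1`, it is enough
to show `∑ c ≤ ∑ a`.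

Multiplying the ratios of consecutive binomial weights gives, for `m = j + 1`,
`(a m / c m) * (k² - m²) (1 - q)² = (a j / c j) * ((n - k + 1)² - m²) q²`,
and `k ≤ n q` gives `c 0 ≤ a 0`. If `k ≤ n - k + 1`, the ratio `a j / c j` is nondecreasing,
so `c ≤ a` termwise. Otherwise `1 - q < q` and the ratio first increases, then decreases, so that
`d = a - c` changes sign at most once, from `+` to `-` (`binWeight_fold_crossing`). The mean
condition `E[K - k] ≥ 0` reads `∑ j * d j ≥ ∑ c > 0`, and a sequence with one such sign change and
positive first moment has a nonnegative sum (`sum_nonneg_of_crossing`).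
-/

/-- The binomial weight `P[K = i]`; it vanishes for `i > n`. -/
noncomputable def binWeight (n : ℕ) (q : ℝ) (i : ℕ) : ℝ :=
  (n.choose i : ℝ) * q ^ i * (1 - q) ^ (n - i)

lemma binWeight_nonneg {n : ℕ} {q : ℝ} (hq : q ∈ Set.Ioo (0 : ℝ) 1) (i : ℕ) :
    0 ≤ binWeight n q i := by
  have h0 := hq.1
  have h1 : 0 < 1 - q := sub_pos.2 hq.2
  unfold binWeight
  positivity

lemma binWeight_pos {n : ℕ} {q : ℝ} (hq : q ∈ Set.Ioo (0 : ℝ) 1) {i : ℕ} (hi : i ≤ n) :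
    0 < binWeight n q i := by
  have h0 := hq.1
  have h1 : 0 < 1 - q := sub_pos.2 hq.2
  have h2 : 0 < n.choose i := Nat.choose_pos hi
  unfold binWeight
  positivity

lemma binWeight_eq_zero {n : ℕ} {q : ℝ} {i : ℕ} (hi : n < i) : binWeight n q i = 0 := by
  simp [binWeight, Nat.choose_eq_zero_of_lt hi]

lemma binWeight_succ (n : ℕ) (q : ℝ) (i : ℕ) :
    binWeight n q (i + 1) * (i + 1) * (1 - q) = binWeight n q i * (n - i) * q := by
  rcases lt_trichotomy i n with hi | rfl | hi
  · have hc : (n.choose (i + 1) : ℝ) * (i + 1) = n.choose i * (n - i) := by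
      have := Nat.choose_succ_right_eq n i
      rw [← Nat.cast_sub hi.le]
      exact_mod_cast this
    have hs : n - i = (n - (i + 1)) + 1 := by omega
    unfold binWeight
    rw [hs, pow_succ (1 - q), pow_succ q]
    linear_combination q ^ i * q * (1 - q) ^ (n - (i + 1)) * (1 - q) * hc
  · rw [binWeight_eq_zero (Nat.lt_succ_self i)]
    simp
  · rw [binWeight_eq_zero hi, binWeight_eq_zero (by omega : n < i + 1)]
    simp

lemma sum_binWeight (n : ℕ) (q : ℝ) : ∑ i ∈ Finset.range (n + 1), binWeight n q i = 1 := by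
  have h := congrArg (Polynomial.eval q) (bernsteinPolynomial.sum ℝ n)
  simpa [bernsteinPolynomial, Polynomial.eval_finsetSum, binWeight] using h

lemma sum_mul_binWeight (n : ℕ) (q : ℝ) :
    ∑ i ∈ Finset.range (n + 1), (i : ℝ) * binWeight n q i = n * q := by
  have h := congrArg (Polynomial.eval q) (bernsteinPolynomial.sum_smul ℝ n)
  simpa [bernsteinPolynomial, Polynomial.eval_finsetSum, binWeight] using h

/-- Folding a sum over `{0, …, n}` at `k`. -/
lemma sum_fold (f : ℕ → ℝ) {n k : ℕ} (hk : k ≤ n) :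
    ∑ i ∈ Finset.range (n + 1), f i =
      ∑ j ∈ Finset.range k, f (k - 1 - j) + ∑ j ∈ Finset.range (n + 1 - k), f (k + j) := by
  rw [Finset.sum_range_reflect, ← Finset.sum_range_add, Nat.add_sub_cancel' (by omega)]

/-- If the negative part of `d` comes after its nonnegative part and the first moment of `d` is
positive, then its sum is nonnegative: compare with the moment about the sign change. -/
lemma sum_nonneg_of_crossing (d : ℕ → ℝ) (k : ℕ)
    (h : ∀ j, j + 1 < k → d j < 0 → d (j + 1) < 0)
    (hm : 0 < ∑ j ∈ Finset.range k, (j : ℝ) * d j) : 0 ≤ ∑ j ∈ Finset.range k, d j := by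
  classical
  by_cases hex : ∃ j, j < k ∧ d j < 0
  · obtain ⟨hlt, hneg⟩ := Nat.find_spec hex
    have hmin : ∀ j, j < Nat.find hex → j < k → 0 ≤ d j := fun j hj hjk => by
      by_contra! hc
      exact Nat.find_min hex hj ⟨hjk, hc⟩
    generalize Nat.find hex = t at *
    have htail : ∀ j, t ≤ j → j < k → d j < 0 := fun j hj => by
      induction j, hj using Nat.le_induction with
      | base => exact fun _ => hneg
      | succ j _ ih => exact fun hjk => h j hjk (ih (by omega))
    have hle : ∑ j ∈ Finset.range k, (j : ℝ) * d j ≤ ∑ j ∈ Finset.range k, (t : ℝ) * d j := by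
      refine Finset.sum_le_sum fun j hj => ?_
      have hjk := Finset.mem_range.1 hj
      rcases lt_or_ge j t with hjt | hjt
      · exact mul_le_mul_of_nonneg_right (by exact_mod_cast hjt.le) (hmin j hjt hjk)
      · exact mul_le_mul_of_nonpos_right (by exact_mod_cast hjt) (htail j hjt hjk).le
    rw [← Finset.mul_sum] at hle
    by_contra! hc
    nlinarith [(Nat.cast_nonneg t : (0 : ℝ) ≤ t)]
  · push Not at hex
    exact Finset.sum_nonneg fun j hj => hex j (Finset.mem_range.1 hj)

/-- The two-sided ratio recursion, with `m = j + 1`. -/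
lemma binWeight_fold_succ {n k : ℕ} (q : ℝ) {j : ℕ} (hj : j + 1 < k) :
    binWeight n q (k + (j + 1)) * binWeight n q (k - 1 - j) *
        (((k : ℝ) ^ 2 - ((j : ℝ) + 1) ^ 2) * (1 - q) ^ 2) =
      binWeight n q (k + j) * binWeight n q (k - 1 - (j + 1)) *
        (((n - k + 1 : ℝ) ^ 2 - ((j : ℝ) + 1) ^ 2) * q ^ 2) := by
  obtain ⟨i, rfl⟩ : ∃ i, k = i + j + 2 := ⟨k - j - 2, by omega⟩
  have e1 : i + j + 2 - 1 - j = i + 1 := by omega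
  have e2 : i + j + 2 - 1 - (j + 1) = i := by omega
  have ha := binWeight_succ n q (i + j + 2 + j)
  have hc := binWeight_succ n q i
  rw [e1, e2, ← add_assoc (i + j + 2) j 1]
  push_cast at ha hc ⊢
  linear_combination binWeight n q (i + 1) * ((i : ℝ) + 1) * (1 - q) * ha +
    binWeight n q (i + j + 2 + j) * (n - (i + j + 2 + j)) * q * hc

lemma odds_le {n k : ℕ} {q : ℝ} (hq : q ∈ Set.Ioo (0 : ℝ) 1) (h : (k : ℝ) ≤ n * q) :
    (k : ℝ) * (1 - q) ≤ (n - k + 1) * q := by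
  nlinarith [hq.1]

/-- The ratio `a j / c j` stays at least `1` as long as every multiplier up to `j` is at
least `1`. -/
lemma binWeight_fold_le {n k : ℕ} {q : ℝ} (hq : q ∈ Set.Ioo (0 : ℝ) 1) (hkn : k ≤ n)
    (h : (k : ℝ) ≤ n * q) (j : ℕ) (hj : j < k)
    (hG : ∀ m : ℕ, m ≤ j →
      ((k : ℝ) ^ 2 - (m : ℝ) ^ 2) * (1 - q) ^ 2 ≤ ((n - k + 1 : ℝ) ^ 2 - (m : ℝ) ^ 2) * q ^ 2) :
    binWeight n q (k - 1 - j) ≤ binWeight n q (k + j) := by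
  have hs : 0 < 1 - q := sub_pos.2 hq.2
  induction j with
  | zero =>
    obtain ⟨i, rfl⟩ : ∃ i, k = i + 1 := ⟨k - 1, by omega⟩
    have hr := binWeight_succ n q i
    have ho := odds_le hq h
    push_cast at ho
    simp only [Nat.add_sub_cancel, Nat.sub_zero, Nat.add_zero]
    have hb := binWeight_nonneg (n := n) hq i
    have hpos : 0 < ((i : ℝ) + 1) * (1 - q) := by positivity
    refine le_of_mul_le_mul_right ?_ hpos
    nlinarith [mul_le_mul_of_nonneg_left ho hb]
  | succ j ih =>
    have hprev := ih (by omega) fun m hm => hG m (by omega)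
    have hrec := binWeight_fold_succ (n := n) q hj
    have hGj := hG (j + 1) le_rfl
    push_cast at hGj
    have hc := binWeight_pos hq (show k - 1 - j ≤ n by omega)
    have hc' := binWeight_nonneg (n := n) hq (k - 1 - (j + 1))
    have hjk : (j : ℝ) + 1 < k := by exact_mod_cast hj
    have hL : 0 < ((k : ℝ) ^ 2 - ((j : ℝ) + 1) ^ 2) * (1 - q) ^ 2 :=
      mul_pos (by nlinarith [(Nat.cast_nonneg j : (0 : ℝ) ≤ j)]) (by positivity)
    refine le_of_mul_le_mul_right ?_ (mul_pos hc hL)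
    calc _ = binWeight n q (k - 1 - j) * binWeight n q (k - 1 - (j + 1)) *
          (((k : ℝ) ^ 2 - ((j : ℝ) + 1) ^ 2) * (1 - q) ^ 2) := by ring
      _ ≤ binWeight n q (k + j) * binWeight n q (k - 1 - (j + 1)) *
          (((n - k + 1 : ℝ) ^ 2 - ((j : ℝ) + 1) ^ 2) * q ^ 2) := by
          refine mul_le_mul ?_ hGj hL.le (mul_nonneg (hc.le.trans hprev) hc')
          exact mul_le_mul_of_nonneg_right hprev hc'
      _ = _ := by rw [← hrec]; ring

/-- When `1 - q < q` the multipliers of the ratio `a j / c j` cross `1` only downwards, so once the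
ratio is below `1` it remains below `1`. -/
lemma binWeight_fold_crossing {n k : ℕ} {q : ℝ} (hq : q ∈ Set.Ioo (0 : ℝ) 1) (hkn : k ≤ n)
    (h : (k : ℝ) ≤ n * q) (hsq : 1 - q < q) (j : ℕ) (hj : j + 1 < k)
    (hneg : binWeight n q (k + j) < binWeight n q (k - 1 - j)) :
    binWeight n q (k + (j + 1)) < binWeight n q (k - 1 - (j + 1)) := by
  have hs : 0 < 1 - q := sub_pos.2 hq.2
  have hsq2 : (1 - q) ^ 2 < q ^ 2 := by nlinarith
  have hG : ((n - k + 1 : ℝ) ^ 2 - ((j : ℝ) + 1) ^ 2) * q ^ 2 ≤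
      ((k : ℝ) ^ 2 - ((j : ℝ) + 1) ^ 2) * (1 - q) ^ 2 := by
    by_contra! hc
    refine hneg.not_ge (binWeight_fold_le hq hkn h j (by omega) fun m hm => ?_)
    have hmj : (m : ℝ) ^ 2 ≤ ((j : ℝ) + 1) ^ 2 := by
      have : (m : ℝ) ≤ j := by exact_mod_cast hm
      gcongr
      linarith
    nlinarith [mul_le_mul_of_nonneg_right hmj (sub_pos.2 hsq2).le]
  have hrec := binWeight_fold_succ (n := n) q hj
  have ha := binWeight_nonneg (n := n) hq (k + j)
  have hc := binWeight_pos hq (show k - 1 - j ≤ n by omega)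
  have hc' := binWeight_pos hq (show k - 1 - (j + 1) ≤ n by omega)
  have hjk : (j : ℝ) + 1 < k := by exact_mod_cast hj
  have hL : 0 < ((k : ℝ) ^ 2 - ((j : ℝ) + 1) ^ 2) * (1 - q) ^ 2 :=
    mul_pos (by nlinarith [(Nat.cast_nonneg j : (0 : ℝ) ≤ j)]) (by positivity)
  refine lt_of_mul_lt_mul_right ?_ (mul_pos hc hL).le
  calc _ = binWeight n q (k + j) * binWeight n q (k - 1 - (j + 1)) *
        (((n - k + 1 : ℝ) ^ 2 - ((j : ℝ) + 1) ^ 2) * q ^ 2) := by rw [← hrec]; ring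
    _ ≤ binWeight n q (k + j) * binWeight n q (k - 1 - (j + 1)) *
        (((k : ℝ) ^ 2 - ((j : ℝ) + 1) ^ 2) * (1 - q) ^ 2) :=
        mul_le_mul_of_nonneg_left hG (mul_nonneg ha hc'.le)
    _ < binWeight n q (k - 1 - j) * binWeight n q (k - 1 - (j + 1)) *
        (((k : ℝ) ^ 2 - ((j : ℝ) + 1) ^ 2) * (1 - q) ^ 2) :=
        mul_lt_mul_of_pos_right (mul_lt_mul_of_pos_right hneg hc') hL
    _ = _ := by ring

lemma lower_le_upper {n k : ℕ} {q : ℝ} (hq : q ∈ Set.Ioo (0 : ℝ) 1) (hkn : k ≤ n) (hk : 0 < k)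
    (h : (k : ℝ) ≤ n * q) :
    ∑ j ∈ Finset.range k, binWeight n q (k - 1 - j) ≤
      ∑ j ∈ Finset.range (n + 1 - k), binWeight n q (k + j) := by
  have hs : 0 < 1 - q := sub_pos.2 hq.2
  have hodds := odds_le hq h
  have hkR : (0 : ℝ) < k := by exact_mod_cast hk
  have hknR : (k : ℝ) ≤ n := by exact_mod_cast hkn
  have hodds2 : (k : ℝ) ^ 2 * (1 - q) ^ 2 ≤ (n - k + 1 : ℝ) ^ 2 * q ^ 2 := by
    rw [← mul_pow, ← mul_pow]
    gcongr
  by_cases hcase : k ≤ n + 1 - k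
  · have hcR : (k : ℝ) ≤ n - k + 1 := by
      have : k + k ≤ n + 1 := by omega
      have : (k : ℝ) + k ≤ n + 1 := by exact_mod_cast this
      linarith
    refine (Finset.sum_le_sum fun j hj => ?_).trans
      (Finset.sum_le_sum_of_subset_of_nonneg (Finset.range_mono hcase)
        fun i _ _ => binWeight_nonneg hq _)
    have hjk := Finset.mem_range.1 hj
    refine binWeight_fold_le hq hkn h j hjk fun m hm => ?_
    have hmk : (m : ℝ) ^ 2 ≤ (k : ℝ) ^ 2 := by
      have : m ≤ k := by omega
      gcongr
    rcases le_total (1 - q) q with hle | hle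
    · have h1 : (1 - q) ^ 2 ≤ q ^ 2 := by gcongr
      have h2 : (k : ℝ) ^ 2 ≤ (n - k + 1 : ℝ) ^ 2 := by gcongr
      exact mul_le_mul (by linarith) h1 (by positivity) (by linarith)
    · have hq0 := hq.1
      have h1 : q ^ 2 ≤ (1 - q) ^ 2 := by gcongr
      nlinarith [mul_le_mul_of_nonneg_left h1 (sq_nonneg (m : ℝ))]
  · have hcR : (n - k + 1 : ℝ) < k := by
      have : n + 1 < k + k := by omega
      have : (n : ℝ) + 1 < k + k := by exact_mod_cast this
      linarith
    have hsq : 1 - q < q := by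
      have hq0 := hq.1
      by_contra! hc
      nlinarith
    -- Both halves are indexed by `range k`: the extra upper weights are zero.
    have hext : ∀ w : ℕ → ℝ, ∑ j ∈ Finset.range (n + 1 - k), w j * binWeight n q (k + j) =
        ∑ j ∈ Finset.range k, w j * binWeight n q (k + j) := fun w => by
      refine Finset.sum_subset (Finset.range_mono (by omega)) fun j _ hj => ?_
      rw [Finset.mem_range] at hj
      rw [binWeight_eq_zero (by omega), mul_zero]
    have hmean := sum_fold (fun i => ((i : ℝ) - k) * binWeight n q i) hkn
    simp only [sub_mul, Finset.sum_sub_distrib, ← Finset.mul_sum, sum_mul_binWeight,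
      sum_binWeight] at hmean
    have hext1 := hext fun _ => 1
    simp only [one_mul] at hext1
    rw [hext1]
    have hup : ∑ j ∈ Finset.range (n + 1 - k), ((k + j : ℕ) : ℝ) * binWeight n q (k + j) =
        ∑ j ∈ Finset.range k, (j : ℝ) * binWeight n q (k + j) +
          k * ∑ j ∈ Finset.range k, binWeight n q (k + j) := by
      rw [hext fun j => ((k + j : ℕ) : ℝ), Finset.mul_sum, ← Finset.sum_add_distrib]
      exact Finset.sum_congr rfl fun j _ => by push_cast; ring
    have hlow : ∑ j ∈ Finset.range k, ((k - 1 - j : ℕ) : ℝ) * binWeight n q (k - 1 - j) =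
        (k - 1) * ∑ j ∈ Finset.range k, binWeight n q (k - 1 - j) -
          ∑ j ∈ Finset.range k, (j : ℝ) * binWeight n q (k - 1 - j) := by
      rw [Finset.mul_sum, ← Finset.sum_sub_distrib]
      refine Finset.sum_congr rfl fun j hj => ?_
      have hjk := Finset.mem_range.1 hj
      rw [Nat.cast_sub (by omega), Nat.cast_sub (by omega)]
      push_cast
      ring
    rw [hup, hlow, hext1] at hmean
    have hcpos : 0 < ∑ j ∈ Finset.range k, binWeight n q (k - 1 - j) :=
      Finset.sum_pos (fun j _ => binWeight_pos hq (by omega)) ⟨0, Finset.mem_range.2 hk⟩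
    have hfin := sum_nonneg_of_crossing
      (fun j => binWeight n q (k + j) - binWeight n q (k - 1 - j)) k
      (fun j hj hneg => sub_neg.2
        (binWeight_fold_crossing hq hkn h hsq j hj (sub_neg.1 hneg)))
      (by
        simp only [mul_sub, Finset.sum_sub_distrib]
        linarith)
    rw [Finset.sum_sub_distrib] at hfin
    linarith

/-- If the empirical proportion `k₁/n₁` does not exceed the Bernoulli parameter `q`,
then the binomial upper tail satisfies `P[K ≥ k₁] ≥ 1/2`. -/
theorem stmt_6 (n₁ k₁ : ℕ) (hn₁ : 1 ≤ n₁) (hk₁n₁ : k₁ ≤ n₁)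
    (q : ℝ) (hq : q ∈ Set.Ioo (0 : ℝ) 1)
    (h : (k₁ : ℝ) / (n₁ : ℝ) ≤ q) :
    (1 : ℝ) / 2 ≤ ∑ i ∈ Finset.Icc k₁ n₁, (n₁.choose i : ℝ) * q ^ i * (1 - q) ^ (n₁ - i) := by
  have hn : (0 : ℝ) < n₁ := by exact_mod_cast hn₁
  have h' : (k₁ : ℝ) ≤ n₁ * q := by
    rw [div_le_iff₀ hn] at h
    linarith
  change (1 : ℝ) / 2 ≤ ∑ i ∈ Finset.Icc k₁ n₁, binWeight n₁ q i
  have hIcc : Finset.Icc k₁ n₁ = Finset.Ico k₁ (n₁ + 1) := by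
    ext i
    simp
  rw [hIcc, Finset.sum_Ico_eq_sum_range]
  have hsum := sum_fold (binWeight n₁ q) hk₁n₁
  rw [sum_binWeight] at hsum
  rcases Nat.eq_zero_or_pos k₁ with rfl | hk
  · rw [Finset.sum_range_zero] at hsum
    linarith
  · linarith [lower_le_upper hq hk₁n₁ hk h']
end

section
/- Define g(k, n) = log₂(n³/(k(n−k))). For all integers n₀, n₁ ≥ 2 with n₀ + n₁ = n: g(1, n₀) + g(1, n₁) ≤ 2 log₂(n³/(4(n−2))); equivalently, (n₀³/(n₀−1)) · (n₁³/(n₁−1)) ≤ n⁶/(16(n−2)²), with equality when n₀ = n₁ = n/2. -/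
/-!
Put `m = (n₀ + n₁) / 2` and `u = ((n₀ - n₁) / 2)²`, so that `n₀ n₁ = m² - u` and
`(n₀ - 1)(n₁ - 1) = (m - 1)² - u`. After clearing denominators the product inequality reads
`(m - 1)² (m² - u)³ ≤ m⁶ ((m - 1)² - u)`, and the difference of the two sides is
`u * ((m - 1)² (3m⁴ - 3m²u + u²) - m⁶)`. The second factor decreases in `u ≤ (m - 2)²`, and
at `u = (m - 2)²` it is a polynomial in `m` that is positive for `m ≥ 5/2` (but not at `m = 2`).
Integrality is therefore essential: distinct `n₀, n₁ ≥ 2` have sum at least `5`, while `u = 0`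
when they are equal. Note that `t ↦ log (t³ / (t - 1))` is not concave near `t = 2`, so
Jensen's inequality does not apply directly. Taking logarithms gives the bound on `g`.
-/

/-- The product inequality for unequal arguments, in terms of the half-sum `m` and the squared
half-difference `u`; the hypothesis `u ≤ (m - 2)²` says that both arguments are at least `2`. -/
lemma core_ineq (m u : ℝ) (hm : 5 / 2 ≤ m) (hu : 0 ≤ u) (hum : u ≤ (m - 2) ^ 2) :
    (m - 1) ^ 2 * (m ^ 2 - u) ^ 3 ≤ m ^ 6 * ((m - 1) ^ 2 - u) := by
  have hmono : 3 * m ^ 4 - 3 * m ^ 2 * (m - 2) ^ 2 + ((m - 2) ^ 2) ^ 2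
      ≤ 3 * m ^ 4 - 3 * m ^ 2 * u + u ^ 2 := by
    have h1 : 0 ≤ 3 * m ^ 2 - u - (m - 2) ^ 2 := by nlinarith
    nlinarith [mul_nonneg (sub_nonneg.2 hum) h1]
  have hend : m ^ 6 ≤ (m - 1) ^ 2 *
      (3 * m ^ 4 - 3 * m ^ 2 * (m - 2) ^ 2 + ((m - 2) ^ 2) ^ 2) := by
    -- The difference is a polynomial in `m - 5/2` with positive coefficients.
    obtain ⟨t, rfl⟩ : ∃ t, m = t + 5 / 2 := ⟨m - 5 / 2, by ring⟩
    have ht : 0 ≤ t := by linarith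
    rw [← sub_nonneg]
    ring_nf
    positivity
  have hfac : 0 ≤ (m - 1) ^ 2 * (3 * m ^ 4 - 3 * m ^ 2 * u + u ^ 2) - m ^ 6 := by
    have := mul_le_mul_of_nonneg_left hmono (sq_nonneg (m - 1))
    linarith
  have := mul_nonneg hu hfac
  linarith

lemma prod_ineq (a b : ℕ) (ha : 2 ≤ a) (hb : 2 ≤ b) :
    (a : ℝ) ^ 3 / ((a : ℝ) - 1) * ((b : ℝ) ^ 3 / ((b : ℝ) - 1))
      ≤ ((a : ℝ) + b) ^ 6 / (16 * ((a : ℝ) + b - 2) ^ 2) := by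
  have ha' : (2 : ℝ) ≤ a := by exact_mod_cast ha
  have hb' : (2 : ℝ) ≤ b := by exact_mod_cast hb
  have h1 : (0 : ℝ) < ((a : ℝ) - 1) * (b - 1) := mul_pos (by linarith) (by linarith)
  have h2 : (0 : ℝ) < 16 * ((a : ℝ) + b - 2) ^ 2 := by
    have : (0 : ℝ) < (a : ℝ) + b - 2 := by linarith
    positivity
  rw [div_mul_div_comm, div_le_div_iff₀ h1 h2]
  rcases eq_or_ne a b with rfl | hne
  · exact le_of_eq (by ring)
  · have hs : (5 : ℝ) ≤ a + b := by exact_mod_cast (by omega : 5 ≤ a + b)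
    have hv : (0 : ℝ) ≤ ((a : ℝ) - 2) * (b - 2) := mul_nonneg (by linarith) (by linarith)
    have := core_ineq (((a : ℝ) + b) / 2) ((((a : ℝ) - b) / 2) ^ 2) (by linarith)
      (sq_nonneg _) (by linarith)
    linarith


/-- The auxiliary function `g(k,n) = log₂(n³/(k(n−k)))`. -/
noncomputable def g (k n : ℝ) : ℝ := Real.logb 2 (n ^ 3 / (k * (n - k)))

/-- For integers `n₀, n₁ ≥ 2` with `n = n₀ + n₁`:
`g(1,n₀) + g(1,n₁) ≤ 2 log₂(n³/(4(n−2)))`, equivalently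
`(n₀³/(n₀−1))·(n₁³/(n₁−1)) ≤ n⁶/(16(n−2)²)`, with equality when `n₀ = n₁ = n/2`. -/
theorem stmt_11 (n₀ n₁ : ℕ) (hn₀ : 2 ≤ n₀) (hn₁ : 2 ≤ n₁) (n : ℕ) (hn : n = n₀ + n₁) :
    (g 1 (n₀ : ℝ) + g 1 (n₁ : ℝ) ≤ 2 * Real.logb 2 ((n : ℝ) ^ 3 / (4 * ((n : ℝ) - 2)))) ∧
    ((n₀ : ℝ) ^ 3 / ((n₀ : ℝ) - 1) * ((n₁ : ℝ) ^ 3 / ((n₁ : ℝ) - 1))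
        ≤ (n : ℝ) ^ 6 / (16 * ((n : ℝ) - 2) ^ 2)) ∧
    (n₀ = n₁ →
      g 1 (n₀ : ℝ) + g 1 (n₁ : ℝ) = 2 * Real.logb 2 ((n : ℝ) ^ 3 / (4 * ((n : ℝ) - 2)))) := by

  subst hn
  have ha : (2 : ℝ) ≤ n₀ := by exact_mod_cast hn₀
  have hb : (2 : ℝ) ≤ n₁ := by exact_mod_cast hn₁
  have ha1 : (0 : ℝ) < (n₀ : ℝ) - 1 := by linarith
  have hb1 : (0 : ℝ) < (n₁ : ℝ) - 1 := by linarith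
  have hprod := prod_ineq n₀ n₁ hn₀ hn₁
  have hA : (0 : ℝ) < (n₀ : ℝ) ^ 3 / ((n₀ : ℝ) - 1) := by positivity
  have hB : (0 : ℝ) < (n₁ : ℝ) ^ 3 / ((n₁ : ℝ) - 1) := by positivity
  push_cast
  refine ⟨?_, hprod, ?_⟩
  · have hsq : ((n₀ : ℝ) + n₁) ^ 6 / (16 * ((n₀ : ℝ) + n₁ - 2) ^ 2)
        = (((n₀ : ℝ) + n₁) ^ 3 / (4 * ((n₀ : ℝ) + n₁ - 2))) ^ 2 := by
      rw [div_pow]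
      ring
    have hlog := Real.logb_le_logb_of_le (b := 2) (by norm_num) (mul_pos hA hB) hprod
    rw [hsq, Real.logb_pow, Real.logb_mul hA.ne' hB.ne'] at hlog
    simpa [g] using hlog
  · rintro rfl
    have hmid : ((n₀ : ℝ) + n₀) ^ 3 / (4 * ((n₀ : ℝ) + n₀ - 2))
        = (n₀ : ℝ) ^ 3 / ((n₀ : ℝ) - 1) := by
      have h : (0 : ℝ) < (n₀ : ℝ) + n₀ - 2 := by linarith
      rw [div_eq_div_iff (by positivity) ha1.ne']
      ring
    rw [hmid, g, one_mul, two_mul]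
end

section
/- Define g(k, n) = log₂(n³/(k(n−k))). Let n₀, n₁ ≥ 2 be integers, n = n₀ + n₁, and let k₀, k₁ be integers with 1 ≤ k₀ ≤ n₀ − 1 and 1 ≤ k₁ ≤ n₁ − 1, and set k = k₀ + k₁. Then (1/2)[g(k₀, n₀) + g(k₁, n₁) − g(k, n)] ≤ log₂(n^{5/2}/(4(n−2))) − 1. -/
/-- `(1/a + 1/c)(1/b + 1/d)` is at most its value at the corner `a = d = 1` of the box with
`a + b` and `c + d` fixed, with denominators cleared. -/
lemma corner_bound {a b c d : ℝ} (ha : 1 ≤ a) (hb : 1 ≤ b) (hc : 1 ≤ c) (hd : 1 ≤ d) :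
    (a + c) * (b + d) * ((a + b - 1) * (c + d - 1)) ≤ (a + b) * (c + d) * (a * b * (c * d)) := by
  obtain ⟨x, hx, rfl⟩ : ∃ x : ℝ, 0 ≤ x ∧ a = 1 + x := ⟨a - 1, by linarith, by ring⟩
  obtain ⟨y, hy, rfl⟩ : ∃ y : ℝ, 0 ≤ y ∧ b = 1 + y := ⟨b - 1, by linarith, by ring⟩
  obtain ⟨z, hz, rfl⟩ : ∃ z : ℝ, 0 ≤ z ∧ c = 1 + z := ⟨c - 1, by linarith, by ring⟩
  obtain ⟨w, hw, rfl⟩ : ∃ w : ℝ, 0 ≤ w ∧ d = 1 + w := ⟨d - 1, by linarith, by ring⟩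
  -- In the excesses `x, y, z, w` over `1` the difference has only nonnegative coefficients.
  rw [← sub_nonneg]
  ring_nf
  positivity

/-- The difference of the two sides is the product of `N²/4 - p` and a factor increasing in
`p`, where `N = u + v` and `p = u v`; that factor is bounded below by its value at
`p = 2N - 4`. -/
lemma balanced_bound {u v : ℝ} (hu : 2 ≤ u) (hv : 2 ≤ v) :
    64 * (u + v - 2) ^ 2 * (u * v) ^ 4 ≤ (u + v) ^ 8 * ((u - 1) * (v - 1)) := by
  obtain ⟨t, ht⟩ : ∃ t : ℝ, t = u + v - 4 := ⟨_, rfl⟩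
  obtain ⟨p, hp⟩ : ∃ p : ℝ, p = u * v := ⟨_, rfl⟩
  have ht0 : 0 ≤ t := by linarith
  have hp1 : 2 * t + 4 ≤ p := by nlinarith
  have hp2 : 0 ≤ (t + 4) ^ 2 / 4 - p := by nlinarith [sq_nonneg (u - v)]
  have e1 : u + v = t + 4 := by linarith
  have e2 : (u - 1) * (v - 1) = p - t - 3 := by rw [hp]; linarith
  rw [e1, e2, ← hp]
  obtain ⟨s, hs, rfl⟩ : ∃ s : ℝ, 0 ≤ s ∧ p = 2 * t + 4 + s := ⟨p - (2 * t + 4), by linarith, by ring⟩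
  generalize hq : 2 * t + 4 + s = p at *
  have key : 0 ≤ 64 * (t + 2) ^ 2 * (((t + 4) ^ 2 / 4) ^ 3 + ((t + 4) ^ 2 / 4) ^ 2 * p
      + ((t + 4) ^ 2 / 4) * p ^ 2 + p ^ 3) - (t + 4) ^ 8 := by
    -- As a polynomial in `t = N - 4` and `s = p - (2N - 4)` it has nonnegative coefficients.
    rw [← hq]
    ring_nf
    positivity
  linear_combination mul_nonneg hp2 key

/-- The doubled and exponentiated claim, with `a, b, c, d` standing for `k₀, m₀, k₁, m₁`. -/
lemma main_bound {a b c d : ℝ} (ha : 1 ≤ a) (hb : 1 ≤ b) (hc : 1 ≤ c) (hd : 1 ≤ d) :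
    64 * (a + b + (c + d) - 2) ^ 2 * ((a + b) ^ 3 * (c + d) ^ 3) * ((a + c) * (b + d))
      ≤ (a + b + (c + d)) ^ 8 * (a * b * (c * d)) := by
  have h1 := corner_bound ha hb hc hd
  have h2 := balanced_bound (u := a + b) (v := c + d) (by linarith) (by linarith)
  have hP : 0 < (a + b - 1) * (c + d - 1) := mul_pos (by linarith) (by linarith)
  refine le_of_mul_le_mul_right ?_ hP
  calc _ = 64 * (a + b + (c + d) - 2) ^ 2 * ((a + b) ^ 3 * (c + d) ^ 3)
        * ((a + c) * (b + d) * ((a + b - 1) * (c + d - 1))) := by ring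
    _ ≤ 64 * (a + b + (c + d) - 2) ^ 2 * ((a + b) ^ 3 * (c + d) ^ 3)
        * ((a + b) * (c + d) * (a * b * (c * d))) := by gcongr
    _ = 64 * (a + b + (c + d) - 2) ^ 2 * ((a + b) * (c + d)) ^ 4 * (a * b * (c * d)) := by ring
    _ ≤ (a + b + (c + d)) ^ 8 * ((a + b - 1) * (c + d - 1)) * (a * b * (c * d)) := by gcongr
    _ = _ := by ring

/-- Upper bound on the residual term of the MDL criterion:
`(1/2)[g(k₀,n₀) + g(k₁,n₁) − g(k,n)] ≤ log₂(n^(5/2)/(4(n−2))) − 1`. -/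
theorem stmt_12 (n₀ n₁ k₀ k₁ : ℕ) (hn₀ : 2 ≤ n₀) (hn₁ : 2 ≤ n₁)
    (hk₀ : 1 ≤ k₀) (hk₀' : k₀ ≤ n₀ - 1) (hk₁ : 1 ≤ k₁) (hk₁' : k₁ ≤ n₁ - 1)
    (n k : ℕ) (hn : n = n₀ + n₁) (hk : k = k₀ + k₁) :
    (1 / 2 : ℝ) * (g (k₀ : ℝ) (n₀ : ℝ) + g (k₁ : ℝ) (n₁ : ℝ) - g (k : ℝ) (n : ℝ))
      ≤ Real.logb 2 ((n : ℝ) ^ ((5 : ℝ) / 2) / (4 * ((n : ℝ) - 2))) - 1 := by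
  obtain ⟨m₀, rfl⟩ : ∃ m, n₀ = k₀ + m := ⟨n₀ - k₀, by omega⟩
  obtain ⟨m₁, rfl⟩ : ∃ m, n₁ = k₁ + m := ⟨n₁ - k₁, by omega⟩
  have ha : (1 : ℝ) ≤ k₀ := by exact_mod_cast hk₀
  have hc : (1 : ℝ) ≤ k₁ := by exact_mod_cast hk₁
  have hb : (1 : ℝ) ≤ m₀ := by exact_mod_cast (by omega : 1 ≤ m₀)
  have hd : (1 : ℝ) ≤ m₁ := by exact_mod_cast (by omega : 1 ≤ m₁)
  subst hn hk
  push_cast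
  generalize (k₀ : ℝ) = a at *
  generalize (k₁ : ℝ) = c at *
  generalize (m₀ : ℝ) = b at *
  generalize (m₁ : ℝ) = d at *
  have hmain := main_bound ha hb hc hd
  have ha0 : 0 < a := by linarith
  have hb0 : 0 < b := by linarith
  have hc0 : 0 < c := by linarith
  have hd0 : 0 < d := by linarith
  unfold g
  rw [show a + b - a = b by ring, show c + d - c = d by ring,
    show a + b + (c + d) - (a + c) = b + d by ring]
  have hN : 0 < a + b + (c + d) := by positivity
  have hN2 : 0 < a + b + (c + d) - 2 := by linarith
  have hlog := Real.logb_le_logb_of_le one_lt_two (by positivity) hmain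
  have l64 : Real.logb 2 64 = 6 := by
    rw [show (64 : ℝ) = 2 ^ (6 : ℝ) by norm_num, Real.logb_rpow] <;> norm_num
  have l4 : Real.logb 2 4 = 2 := by
    rw [show (4 : ℝ) = 2 ^ (2 : ℝ) by norm_num, Real.logb_rpow] <;> norm_num
  generalize a + b + (c + d) = N at *
  generalize N - 2 = M at *
  simp (disch := positivity) only [Real.logb_mul, Real.logb_div, Real.logb_pow,
    Real.logb_rpow_eq_mul_logb_of_pos, l64, l4] at hlog ⊢
  push_cast at hlog ⊢
  linarith
end
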